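/- For the asymptotic density zero ideal 𝒵: non(M_𝒵) = max{𝔟, non(ℰ)} and cov(M_𝒵) = min{𝔡, cov(ℰ)}. -/

import Mathlib

open Cardinal Filter Set
open scoped ENNReal

noncomputable section

/-- An ideal on a (countable) set `X`, in the sense of the paper: a proper family of
subsets of `X` closed under taking subsets and finite unions and containing all
finite subsets of `X`. -/
structure IsIdealOn {X : Type} (I : Set (Set X)) : Prop where
  subset_mem : ∀ ⦃A B : Set X⦄, A ⊆ B → B ∈ I → A ∈ I
  union_mem : ∀ ⦃A B : Set X⦄, A ∈ I → B ∈ I → A ∪ B ∈ I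
  finite_mem : ∀ ⦃A : Set X⦄, A.Finite → A ∈ I
  proper : (univ : Set X) ∉ I

/-- The finite initial segment `x ↾ n` of `x : X^ω`, as a list (an element of `X^{<ω}`). -/
def seg {X : Type} (x : ℕ → X) (n : ℕ) : List X := (List.range n).map x

/-- The `I`-Miller null ideal `M_I`: the σ-ideal on `X^ω` generated by the sets
`M_φ = {x | ∀^∞ n, x n ∈ φ (x ↾ n)}`, where `φ : X^{<ω} → I`.  (A set is in the
generated σ-ideal iff it is covered by countably many generators.) -/
def MIdeal {X : Type} (I : Set (Set X)) : Set (Set (ℕ → X)) :=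
  {A | ∃ φ : ℕ → List X → Set X, (∀ n s, φ n s ∈ I) ∧
    A ⊆ ⋃ n, {x : ℕ → X | ∀ᶠ m in atTop, x m ∈ φ n (seg x m)}}

/-- The σ-ideal `K_I` on `X^ω` generated by the sets
`K_φ = {x | ∀^∞ n, x n ∈ φ n}`, where `φ : ω → I`. -/
def KIdeal {X : Type} (I : Set (Set X)) : Set (Set (ℕ → X)) :=
  {A | ∃ φ : ℕ → ℕ → Set X, (∀ n m, φ n m ∈ I) ∧
    A ⊆ ⋃ n, {x : ℕ → X | ∀ᶠ m in atTop, x m ∈ φ n m}}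

/-- Additivity `add(J)` of a (σ-)ideal `J`: the least cardinality of a subfamily of `J`
whose union is not in `J`. -/
def addIdeal {Y : Type} (J : Set (Set Y)) : Cardinal :=
  sInf {c | ∃ 𝒜 : Set (Set Y), 𝒜 ⊆ J ∧ ⋃₀ 𝒜 ∉ J ∧ Cardinal.mk 𝒜 = c}

/-- Covering number `cov(J)`: the least cardinality of a subfamily of `J` covering `Y`. -/
def covIdeal {Y : Type} (J : Set (Set Y)) : Cardinal :=
  sInf {c | ∃ 𝒜 : Set (Set Y), 𝒜 ⊆ J ∧ ⋃₀ 𝒜 = Set.univ ∧ Cardinal.mk 𝒜 = c}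

/-- Uniformity `non(J)`: the least cardinality of a subset of `Y` not in `J`. -/
def nonIdeal {Y : Type} (J : Set (Set Y)) : Cardinal :=
  sInf {c | ∃ S : Set Y, S ∉ J ∧ Cardinal.mk S = c}

/-- Cofinality `cof(J)`: the least cardinality of a cofinal (w.r.t. `⊆`) subfamily of `J`. -/
def cofIdeal {Y : Type} (J : Set (Set Y)) : Cardinal :=
  sInf {c | ∃ 𝒜 : Set (Set Y), 𝒜 ⊆ J ∧ (∀ B ∈ J, ∃ A ∈ 𝒜, B ⊆ A) ∧ Cardinal.mk 𝒜 = c}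

/-- `f ≤* g`: eventual domination on `ω^ω`. -/
def LeStar (f g : ℕ → ℕ) : Prop := ∀ᶠ n in atTop, f n ≤ g n

/-- The bounding number `𝔟`. -/
def bNum : Cardinal :=
  sInf {c | ∃ F : Set (ℕ → ℕ), (∀ g : ℕ → ℕ, ∃ f ∈ F, ¬ LeStar f g) ∧ Cardinal.mk F = c}

/-- The dominating number `𝔡`. -/
def dNum : Cardinal :=
  sInf {c | ∃ F : Set (ℕ → ℕ), (∀ f : ℕ → ℕ, ∃ g ∈ F, LeStar f g) ∧ Cardinal.mk F = c}

/-- `A ⊆* B`: almost inclusion (`A \ B` finite). -/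
def AlSub {X : Type} (A B : Set X) : Prop := (A \ B).Finite

/-- The set of cardinalities of witnessing families for `add*_ω(I)`: families `𝒜 ⊆ I`
such that for every countable `B̄ ⊆ I` some `A ∈ 𝒜` satisfies `A ⊄* B` for all `B ∈ B̄`.
`add*_ω(I)` is the minimum of this set (`∞` if it is empty). -/
def addStarOmegaFam {X : Type} (I : Set (Set X)) : Set Cardinal :=
  {c | ∃ 𝒜 : Set (Set X), 𝒜 ⊆ I ∧
    (∀ B : ℕ → Set X, (∀ n, B n ∈ I) → ∃ A ∈ 𝒜, ∀ n, ¬ AlSub A (B n)) ∧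
    Cardinal.mk 𝒜 = c}

/-- The set of cardinalities of witnessing families for `cof*_ω(I)`: families `𝒜` of
countable subsets of `I` such that for every countable `B̄ ⊆ I` there is `Ā ∈ 𝒜` with:
every `B ∈ B̄` satisfies `B ⊆* A` for some `A ∈ Ā`.  `cof*_ω(I)` is the minimum. -/
def cofStarOmegaFam {X : Type} (I : Set (Set X)) : Set Cardinal :=
  {c | ∃ 𝒜 : Set (Set (Set X)), (∀ As ∈ 𝒜, As.Countable ∧ As ⊆ I) ∧
    (∀ B : ℕ → Set X, (∀ n, B n ∈ I) → ∃ As ∈ 𝒜, ∀ n, ∃ A ∈ As, AlSub (B n) A) ∧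
    Cardinal.mk 𝒜 = c}

/-- The set of cardinalities of witnessing families for `non*_ω(I)`: families `𝒜` of
infinite subsets of `X` such that for every countable `B̄ ⊆ I` there is `A ∈ 𝒜` with
`A ∩ B` finite for all `B ∈ B̄`.  `non*_ω(I)` is the minimum of this set. -/
def nonStarOmegaFam {X : Type} (I : Set (Set X)) : Set Cardinal :=
  {c | ∃ 𝒜 : Set (Set X), (∀ A ∈ 𝒜, A.Infinite) ∧
    (∀ B : ℕ → Set X, (∀ n, B n ∈ I) → ∃ A ∈ 𝒜, ∀ n, (A ∩ B n).Finite) ∧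
    Cardinal.mk 𝒜 = c}

/-- The set of cardinalities of witnessing families for `cov*(I)`: families `𝒜 ⊆ I` such
that every infinite `B ⊆ X` has infinite intersection with some member of `𝒜`.
`cov*(I)` is the minimum of this set (`∞` if it is empty, i.e. if `I` is not tall). -/
def covStarFam {X : Type} (I : Set (Set X)) : Set Cardinal :=
  {c | ∃ 𝒜 : Set (Set X), 𝒜 ⊆ I ∧
    (∀ B : Set X, B.Infinite → ∃ A ∈ 𝒜, (A ∩ B).Infinite) ∧ Cardinal.mk 𝒜 = c}

/-- The set of cardinalities of witnessing families for `non*(I)`: families `𝒜` of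
infinite subsets of `X` such that every `B ∈ I` has finite intersection with some
member of `𝒜`.  `non*(I)` is the minimum of this set. -/
def nonStarFam {X : Type} (I : Set (Set X)) : Set Cardinal :=
  {c | ∃ 𝒜 : Set (Set X), (∀ A ∈ 𝒜, A.Infinite) ∧
    (∀ B ∈ I, ∃ A ∈ 𝒜, (A ∩ B).Finite) ∧ Cardinal.mk 𝒜 = c}

/-- The meager ideal of the product space `X^ω`, where `X` carries the discrete
topology (for countable `X` this is a Polish space). -/
def meagerIdeal (X : Type) : Set (Set (ℕ → X)) :=
  letI : TopologicalSpace X := ⊥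
  {A : Set (ℕ → X) | IsMeagre A}

/-- The Fubini product `I ⊗ J` of two ideals. -/
def Fubini {X Y : Type} (I : Set (Set X)) (J : Set (Set Y)) : Set (Set (X × Y)) :=
  {A | {x : X | {y : Y | (x, y) ∈ A} ∉ J} ∈ I}

/-- The ideal `Fin` of finite subsets of `X`. -/
def finIdeal (X : Type) : Set (Set X) := {A : Set X | A.Finite}

/-- The nowhere dense ideal on `2^{<ω}`: `A` belongs to it iff for every `s` there is an
extension `t ⊇ s` none of whose extensions belongs to `A`. -/
def nwdIdeal : Set (Set (List Bool)) :=
  {A | ∀ s : List Bool, ∃ t : List Bool, s <+: t ∧ ∀ u : List Bool, t <+: u → u ∉ A}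

/-- A submeasure: monotone, finitely subadditive, vanishing on `∅`. -/
def IsSubmeasure (φ : Set ℕ → ℝ≥0∞) : Prop :=
  φ ∅ = 0 ∧ (∀ A B : Set ℕ, A ⊆ B → φ A ≤ φ B) ∧ ∀ A B : Set ℕ, φ (A ∪ B) ≤ φ A + φ B

/-- `I` is gradually fragmented: there are a partition `⟨P n⟩` of `ω` into nonempty finite
sets and submeasures `φ n` with `A ∈ I ↔ sup_n φ n (A ∩ P n) < ∞`, together with
`f : ω → ω` such that for all `n, i`, for all but finitely many `j`: any family of at
most `i` subsets of `P j`, each of `φ j`-value `≤ n`, has union of `φ j`-value `≤ f n`. -/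
def GraduallyFragmented (I : Set (Set ℕ)) : Prop :=
  ∃ (P : ℕ → Set ℕ) (φ : ℕ → Set ℕ → ℝ≥0∞) (f : ℕ → ℕ),
    (∀ n, (P n).Finite) ∧ (∀ n, (P n).Nonempty) ∧
    (∀ n m, n ≠ m → Disjoint (P n) (P m)) ∧ (⋃ n, P n) = Set.univ ∧
    (∀ n, IsSubmeasure (φ n)) ∧
    (∀ A : Set ℕ, A ∈ I ↔ (⨆ n, φ n (A ∩ P n)) < ⊤) ∧
    (∀ n i : ℕ, ∀ᶠ j in atTop, ∀ ℬ : Finset (Set ℕ), ℬ.card ≤ i →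
      (∀ B ∈ ℬ, B ⊆ P j) → (∀ B ∈ ℬ, φ j B ≤ (n : ℝ≥0∞)) →
      φ j (⋃ B ∈ ℬ, B) ≤ ((f n : ℕ) : ℝ≥0∞))

/-- The basic clopen cylinder of `2^ω` determined by a finite binary string. -/
def cylSet (s : List Bool) : Set (ℕ → Bool) :=
  {x | ∀ i : Fin s.length, x i.val = s.get i}

/-- `A ⊆ 2^ω` is null for the uniform (coin-flipping) product measure: for every `ε > 0`
it is covered by countably many cylinders of total weight `≤ ε` (the cylinder of a
string `s` has weight `2^{-|s|}`). -/
def IsNullCantor (A : Set (ℕ → Bool)) : Prop :=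
  ∀ ε : ℝ≥0∞, 0 < ε → ∃ s : ℕ → List Bool,
    A ⊆ (⋃ n, cylSet (s n)) ∧ (∑' n : ℕ, (2⁻¹ : ℝ≥0∞) ^ (s n).length) ≤ ε

/-- Coordinatewise addition modulo 2 on `2^ω`. -/
def xorAdd (x y : ℕ → Bool) : ℕ → Bool := fun n => xor (x n) (y n)

/-- The transitive additivity `add_t(𝒩)` of the null ideal of `2^ω`:
`min {|A| : A ⊆ 2^ω ∧ ∃ X ∈ 𝒩, A + X ∉ 𝒩}`. -/
def addTNull : Cardinal :=
  sInf {c | ∃ A : Set (ℕ → Bool),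
    (∃ N : Set (ℕ → Bool), IsNullCantor N ∧ ¬ IsNullCantor (Set.image2 xorAdd A N)) ∧
    Cardinal.mk A = c}

/-- Kada's cardinal invariant `𝔩`: the least `κ` such that for every `g ∈ ω^ω` there is a
family `𝒮`, of size `κ`, of slaloms `S` with `S i ⊆ {0, …, g i}` and `|S i| ≤ i`, such
that every `f ≤* g` satisfies `f ∈* S` for some `S ∈ 𝒮`. -/
def lNum : Cardinal :=
  sInf {c : Cardinal | ∀ g : ℕ → ℕ, ∃ 𝒮 : Set (ℕ → Finset ℕ),
    (∀ S ∈ 𝒮, ∀ i : ℕ, S i ⊆ Finset.range (g i + 1) ∧ (S i).card ≤ i) ∧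
    (∀ f : ℕ → ℕ, LeStar f g → ∃ S ∈ 𝒮, ∀ᶠ i in atTop, f i ∈ S i) ∧
    Cardinal.mk 𝒮 = c}

/-- Membership in `C ⊆ 2^ω` only depends on the first `n` coordinates. -/
def DeterminedBy (C : Set (ℕ → Bool)) (n : ℕ) : Prop :=
  ∀ x y : ℕ → Bool, (∀ i < n, x i = y i) → (x ∈ C ↔ y ∈ C)

/-- Extension of a finite binary string by `false`s. -/
def extendFalse {n : ℕ} (s : Fin n → Bool) : ℕ → Bool :=
  fun i => if h : i < n then s ⟨i, h⟩ else false

/-- `C ⊆ 2^ω` has uniform product measure `1/2`: for some `n`, membership in `C` depends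
only on the first `n` coordinates and exactly half of the `2^n` cylinders of level `n`
are included in `C`. -/
def HalfMeasure (C : Set (ℕ → Bool)) : Prop :=
  ∃ n : ℕ, DeterminedBy C n ∧
    2 * Nat.card {s : Fin n → Bool // extendFalse s ∈ C} = 2 ^ n

/-- Clopenness in the Cantor space `2^ω` (`Bool` discrete, product topology). -/
def IsClopenCantor (C : Set (ℕ → Bool)) : Prop :=
  letI : TopologicalSpace Bool := ⊥
  IsClopen C

/-- Closedness in the Cantor space `2^ω`. -/
def IsClosedCantor (C : Set (ℕ → Bool)) : Prop :=
  letI : TopologicalSpace Bool := ⊥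
  IsClosed C

/-- `Ω`: the (countable) set of clopen subsets of `2^ω` of measure `1/2`. -/
abbrev SoleckiBase : Type := {C : Set (ℕ → Bool) // IsClopenCantor C ∧ HalfMeasure C}

/-- The Solecki ideal `𝒮` on `Ω`: the ideal generated by the sets
`I_y = {C ∈ Ω : y ∈ C}` for `y ∈ 2^ω`. -/
def SoleckiIdeal : Set (Set SoleckiBase) :=
  {A | ∃ F : Finset (ℕ → Bool), A ⊆ ⋃ y ∈ F, {C : SoleckiBase | y ∈ C.val}}

/-- `cov_ω(𝒩)`: the least cardinality of a family of Lebesgue-null sets of reals such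
that every countable set of reals is contained in one of them. -/
def covOmegaNull : Cardinal :=
  sInf {c | ∃ 𝒜 : Set (Set ℝ), (∀ N ∈ 𝒜, MeasureTheory.volume N = 0) ∧
    (∀ B : Set ℝ, B.Countable → ∃ N ∈ 𝒜, B ⊆ N) ∧ Cardinal.mk 𝒜 = c}

/-- `non(𝒩)`: the least cardinality of a non-null set of reals. -/
def nonNullReal : Cardinal :=
  sInf {c | ∃ S : Set ℝ, MeasureTheory.volume S ≠ 0 ∧ Cardinal.mk S = c}

/-- The eventually different ideal `ℰ𝒟` on `ω × ω`. -/
def EDIdeal : Set (Set (ℕ × ℕ)) :=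
  {A | ∃ k : ℕ, ∀ᶠ n in atTop,
    {m : ℕ | (n, m) ∈ A}.Finite ∧ {m : ℕ | (n, m) ∈ A}.ncard ≤ k}

/-- Characteristic function identifying `P(ω)` with `2^ω`. -/
def chiSet (A : Set ℕ) : ℕ → Bool :=
  fun n => @decide (n ∈ A) (Classical.propDecidable _)

/-- `I ⊆ P(ω)` is `F_σ`: under the identification `P(ω) ≅ 2^ω`, `I` is a countable
union of closed subsets of the Cantor space. -/
def IsFSigmaIdeal (I : Set (Set ℕ)) : Prop :=
  ∃ C : ℕ → Set (ℕ → Bool), (∀ n, IsClosedCantor (C n)) ∧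
    ∀ A : Set ℕ, A ∈ I ↔ chiSet A ∈ ⋃ n, C n

/-- The underlying countable set of `Fin^{⊗(n+1)}`: `FinPowType 0 = ω`,
`FinPowType (n+1) = ω × FinPowType n`. -/
def FinPowType : ℕ → Type
  | 0 => ℕ
  | n + 1 => ℕ × FinPowType n

/-- The iterated Fubini power of `Fin`: `FinPowIdeal 0 = Fin`, and
`FinPowIdeal (n+1) = Fin ⊗ FinPowIdeal n`; thus `Fin^{⊗k} = FinPowIdeal (k-1)`. -/
def FinPowIdeal : (n : ℕ) → Set (Set (FinPowType n))
  | 0 => finIdeal ℕ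
  | n + 1 => Fubini (finIdeal ℕ) (FinPowIdeal n)

/-- `π` `k`-constantly bounding-predicts `f`: for all but finitely many `i` there is
`j ∈ [i, i + k)` with `f j ≤ π (f ↾ j)`. -/
def ConstBddPred (k : ℕ) (π : List ℕ → ℕ) (f : ℕ → ℕ) : Prop :=
  ∀ᶠ i in atTop, ∃ j : ℕ, i ≤ j ∧ j < i + k ∧ f j ≤ π (seg f j)

/-- The constant bounding evasion number `𝔢^const_≤(k)`. -/
def eConstLe (k : ℕ) : Cardinal :=
  sInf {c | ∃ F : Set (ℕ → ℕ),
    (∀ π : List ℕ → ℕ, ∃ f ∈ F, ¬ ConstBddPred k π f) ∧ Cardinal.mk F = c}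

/-- The constant bounding prediction number `𝔳^const_≤(k)`. -/
def vConstLe (k : ℕ) : Cardinal :=
  sInf {c | ∃ Ps : Set (List ℕ → ℕ),
    (∀ f : ℕ → ℕ, ∃ π ∈ Ps, ConstBddPred k π f) ∧ Cardinal.mk Ps = c}

/-- The asymptotic density zero ideal `𝒵` on `ω`. -/
def densityZero : Set (Set ℕ) :=
  {A : Set ℕ | Tendsto (fun n : ℕ => ((A ∩ Iio n).ncard : ℝ) / (n : ℝ)) atTop (nhds (0 : ℝ))}

/-- The σ-ideal `ℰ` on `2^ω` generated by the closed null sets. -/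
def EIdeal : Set (Set (ℕ → Bool)) :=
  {A | ∃ C : ℕ → Set (ℕ → Bool),
    (∀ n, IsClosedCantor (C n) ∧ IsNullCantor (C n)) ∧ A ⊆ ⋃ n, C n}

/-!
A closed subset of `2^ω` is null iff its tree has levels of arbitrarily small relative size. Hence,
if `C` is closed and null and `σ` is a finite string, the numbers `k` such that some member of `C`
extends `σ` followed by the binary expansion of `k` lie, up to finitely many, in few residue
classes modulo a power of `2`, and so form a set of density zero. Concatenating binary expansions
therefore gives a map `ω^ω → 2^ω` along which `ℰ` pulls back into `M_𝒵`.

Conversely, cut `ω` into consecutive blocks of strictly increasing lengths `k n` and read each block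
of a binary sequence as a number below `2 ^ k n`. The histories of length `n + 1` that can occur
belong to a finite set depending only on `k n`; so if `k (n + 1)` is large enough compared to `k n`,
a predictor `φ` with values in `𝒵` admits at most half of the numbers below `2 ^ k (n + 1)` after
each of these histories. If this happens for infinitely many `n`, then for every `n₀` the binary
sequences captured by `φ` from `n₀` on form a closed null set. It does happen infinitely often as
soon as `k` is above a function `g` that is not dominated by a certain function depending only on
`φ`, and this is how `𝔟` and `𝔡` enter.
-/

section Segments

variable {X : Type} (x : ℕ → X)

@[simp] theorem length_seg (n : ℕ) : (seg x n).length = n := by simp [seg]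

theorem seg_succ (n : ℕ) : seg x (n + 1) = seg x n ++ [x n] := by
  simp [seg, List.range_succ]

theorem seg_add (m n : ℕ) : seg x (m + n) = seg x m ++ seg (fun i => x (m + i)) n := by
  simp [seg, List.range_add]

theorem seg_prefix_seg {m n : ℕ} (h : m ≤ n) : seg x m <+: seg x n := by
  obtain ⟨d, rfl⟩ := Nat.exists_eq_add_of_le h
  exact seg_add x m d ▸ List.prefix_append _ _

variable {x}

theorem seg_eq_seg_iff {y : ℕ → X} {n : ℕ} : seg x n = seg y n ↔ ∀ i < n, x i = y i := by
  simp [seg, List.map_inj_left]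

theorem getD_seg {n i : ℕ} (h : i < n) (a : X) : (seg x n).getD i a = x i := by
  simp [seg, h]

theorem exists_forall_eq_apply_seg (f : List X → X) : ∃ x : ℕ → X, ∀ n, x n = f (seg x n) := by
  let build : ℕ → List X := Nat.rec [] fun _ s => s ++ [f s]
  refine ⟨fun n => f (build n), fun n => congrArg f ?_⟩
  induction n with
  | zero => rfl
  | succ n ih => rw [seg_succ, ← ih]

end Segments

section Cylinders

theorem mem_cylSet_iff {y : ℕ → Bool} {s : List Bool} : y ∈ cylSet s ↔ seg y s.length = s := by
  constructor
  · intro h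
    exact List.ext_get (length_seg y _) fun i _ hi => by simpa [seg] using h ⟨i, hi⟩
  · intro h i
    rw [← getD_seg (x := y) i.isLt false, h, List.getD_eq_getElem _ _ i.isLt, List.get_eq_getElem]

theorem DeterminedBy.isOpen {C : Set (ℕ → Bool)} {n : ℕ} (h : DeterminedBy C n) : IsOpen C :=
  isOpen_iff_forall_mem_open.2 fun x hx =>
    ⟨PiNat.cylinder x n, fun y hy => (h y x hy).2 hx, PiNat.isOpen_cylinder _ x n,
      PiNat.self_mem_cylinder x n⟩

theorem DeterminedBy.isClosed {C : Set (ℕ → Bool)} {n : ℕ} (h : DeterminedBy C n) : IsClosed C :=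
  isOpen_compl_iff.1 (DeterminedBy.isOpen (n := n) fun x y hxy => not_congr (h x y hxy))

theorem isOpen_cylSet (s : List Bool) : IsOpen (cylSet s) :=
  DeterminedBy.isOpen (n := s.length) fun x y hxy => by
    simp only [mem_cylSet_iff, seg_eq_seg_iff.2 hxy]

end Cylinders

section DensityZero

theorem mem_densityZero_iff_isLittleO {A : Set ℕ} : A ∈ densityZero ↔
    (fun n : ℕ => ((A ∩ Iio n).ncard : ℝ)) =o[atTop] fun n : ℕ => (n : ℝ) := by
  refine (Asymptotics.isLittleO_iff_tendsto' ?_).symm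
  filter_upwards [eventually_ne_atTop 0] with n hn h
  exact absurd (Nat.cast_eq_zero.1 h) hn

theorem mem_densityZero_iff {A : Set ℕ} :
    A ∈ densityZero ↔ ∀ j, ∀ᶠ n in atTop, j * (A ∩ Iio n).ncard ≤ n := by
  rw [mem_densityZero_iff_isLittleO, Asymptotics.isLittleO_iff_nat_mul_le]
  simp only [Real.norm_natCast]
  exact_mod_cast Iff.rfl

theorem isIdealOn_densityZero : IsIdealOn densityZero where
  subset_mem A B hAB hB := mem_densityZero_iff.2 fun j =>
    (mem_densityZero_iff.1 hB j).mono fun n hn => le_trans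
      (Nat.mul_le_mul_left j (ncard_le_ncard (inter_subset_inter_left _ hAB)
        ((finite_Iio n).inter_of_right B))) hn
  union_mem A B hA hB := mem_densityZero_iff.2 fun j => by
    filter_upwards [mem_densityZero_iff.1 hA (2 * j), mem_densityZero_iff.1 hB (2 * j)]
      with n hAn hBn
    have hunion : ((A ∪ B) ∩ Iio n).ncard ≤ (A ∩ Iio n).ncard + (B ∩ Iio n).ncard := by
      rw [union_inter_distrib_right]
      exact ncard_union_le _ _
    nlinarith [Nat.mul_le_mul_left j hunion]
  finite_mem A hA := mem_densityZero_iff.2 fun j => by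
    filter_upwards [eventually_ge_atTop (j * A.ncard)] with n hn
    exact (Nat.mul_le_mul_left j (ncard_le_ncard inter_subset_left hA)).trans hn
  proper h := by
    obtain ⟨n, hle, hpos⟩ := ((mem_densityZero_iff.1 h 2).and (eventually_gt_atTop 0)).exists
    rw [univ_inter, ← Finset.coe_Iio, ncard_coe_finset, Nat.card_Iio] at hle
    omega

theorem ncard_inter_Iio_le_of_forall_mod_mem {A : Set ℕ} {m : ℕ} {R : Finset ℕ}
    (h : ∀ k ∈ A, k % m ∈ R) (n : ℕ) : (A ∩ Iio n).ncard ≤ R.card * (n / m + 1) := by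
  have hmaps : MapsTo (fun k => (k % m, k / m)) (A ∩ Iio n) (R ×ˢ Finset.range (n / m + 1)) :=
    fun k hk => ⟨h k hk.1, by
      simpa [Nat.lt_succ_iff] using Nat.div_le_div_right (c := m) hk.2.le⟩
  have hinj : InjOn (fun k => (k % m, k / m)) (A ∩ Iio n) := fun k _ l _ hkl => by
    rw [Prod.mk.injEq] at hkl
    rw [← Nat.mod_add_div k m, ← Nat.mod_add_div l m, hkl.1, hkl.2]
  calc (A ∩ Iio n).ncard ≤ ((R ×ˢ Finset.range (n / m + 1) : Finset (ℕ × ℕ)) : Set (ℕ × ℕ)).ncard :=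
        ncard_le_ncard_of_injOn _ (by rw [Finset.coe_product]; exact hmaps) hinj
          (Finset.finite_toSet _)
    _ = R.card * (n / m + 1) := by
        rw [ncard_coe_finset, Finset.card_product, Finset.card_range]

theorem mem_densityZero_of_mod_mem {A : Set ℕ}
    (h : ∀ j, ∃ m, ∃ R : Finset ℕ, j * R.card ≤ m ∧ ∀ᶠ k in atTop, k ∈ A → k % m ∈ R) :
    A ∈ densityZero := by
  refine mem_densityZero_iff.2 fun j => ?_
  obtain ⟨m, R, hR, hA⟩ := h (2 * j)
  obtain ⟨k₀, hk₀⟩ := eventually_atTop.1 hA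
  filter_upwards [eventually_ge_atTop (2 * j * k₀ + m)] with n hn
  have hcover : A ∩ Iio n ⊆ Iio k₀ ∪ A ∩ Ici k₀ ∩ Iio n := fun k hk =>
    (lt_or_ge k k₀).imp id fun hge => ⟨⟨hk.1, hge⟩, hk.2⟩
  have hcount : (A ∩ Iio n).ncard ≤ k₀ + R.card * (n / m + 1) :=
    calc (A ∩ Iio n).ncard ≤ (Iio k₀).ncard + (A ∩ Ici k₀ ∩ Iio n).ncard :=
          (ncard_le_ncard hcover ((finite_Iio _).union ((finite_Iio _).inter_of_right _))).trans
            (ncard_union_le _ _)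
      _ ≤ k₀ + R.card * (n / m + 1) := by
          refine add_le_add ?_ (ncard_inter_Iio_le_of_forall_mod_mem
            (fun k hk => hk₀ k hk.2 hk.1) n)
          rw [← Finset.coe_Iio, ncard_coe_finset, Nat.card_Iio]
  have hdiv : 2 * j * R.card * (n / m + 1) ≤ n + m :=
    calc 2 * j * R.card * (n / m + 1) ≤ m * (n / m + 1) := Nat.mul_le_mul_right _ hR
      _ ≤ n + m := by rw [mul_add_one]; exact Nat.add_le_add_right (Nat.mul_div_le n m) m
  nlinarith [Nat.mul_le_mul_left (2 * j) hcount]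

end DensityZero

section MillerNullIdeal

variable {X : Type} {I : Set (Set X)}

theorem IsIdealOn.biUnion_mem (hI : IsIdealOn I) {ι : Type*} (s : Finset ι) {A : ι → Set X}
    (hA : ∀ i ∈ s, A i ∈ I) : ⋃ i ∈ s, A i ∈ I := by
  classical
  induction s using Finset.induction_on with
  | empty => simpa using hI.finite_mem finite_empty
  | insert i s _ ih =>
    rw [Finset.set_biUnion_insert]
    exact hI.union_mem (hA i (Finset.mem_insert_self i s))
      (ih fun l hl => hA l (Finset.mem_insert_of_mem hl))

theorem setOf_eventually_mem_mIdeal {φ : List X → Set X} (hφ : ∀ s, φ s ∈ I) :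
    {x : ℕ → X | ∀ᶠ m in atTop, x m ∈ φ (seg x m)} ∈ MIdeal I :=
  ⟨fun _ => φ, fun _ => hφ, fun _ hx => mem_iUnion.2 ⟨0, hx⟩⟩

theorem isLowerSet_mIdeal : IsLowerSet (MIdeal I) :=
  fun _ _ hBA ⟨φ, hφ, hA⟩ => ⟨φ, hφ, hBA.trans hA⟩

theorem IsIdealOn.exists_forall_eventually_mem (hI : IsIdealOn I) {A : Set (ℕ → X)}
    (hA : A ∈ MIdeal I) : ∃ φ : List X → Set X, (∀ s, φ s ∈ I) ∧
      ∀ x ∈ A, ∀ᶠ m in atTop, x m ∈ φ (seg x m) := by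
  obtain ⟨φ, hφ, hA⟩ := hA
  refine ⟨fun s => ⋃ n ∈ Finset.range (s.length + 1), φ n s,
    fun s => hI.biUnion_mem _ fun n _ => hφ n s, fun x hx => ?_⟩
  obtain ⟨n, hn⟩ := mem_iUnion.1 (hA hx)
  filter_upwards [hn, eventually_ge_atTop n] with m hm hnm
  exact mem_biUnion (Finset.mem_range.2 (by rw [length_seg]; omega)) hm

theorem IsIdealOn.univ_notMem_mIdeal (hI : IsIdealOn I) : Set.univ ∉ MIdeal I := by
  intro h
  obtain ⟨φ, hφ, hmem⟩ := hI.exists_forall_eventually_mem h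
  have hescape : ∀ s, ∃ a, a ∉ φ s := fun s => by
    by_contra! hall
    exact hI.proper (eq_univ_of_forall hall ▸ hφ s)
  choose f hf using hescape
  obtain ⟨x, hx⟩ := exists_forall_eq_apply_seg f
  obtain ⟨m, hm⟩ := (hmem x (mem_univ x)).exists
  exact hf _ (hx m ▸ hm)

theorem IsIdealOn.setOf_leStar_mem_mIdeal {I : Set (Set ℕ)} (hI : IsIdealOn I) (g : ℕ → ℕ) :
    {x | LeStar x g} ∈ MIdeal I := by
  simpa [LeStar] using
    setOf_eventually_mem_mIdeal fun s : List ℕ => hI.finite_mem (finite_Iic (g s.length))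

end MillerNullIdeal

section InitialSegments

/-- Level `m` of the tree of finite initial segments of members of `C`. -/
def initSegs (C : Set (ℕ → Bool)) (m : ℕ) : Set (List Bool) := (fun y => seg y m) '' C

variable {C D : Set (ℕ → Bool)}

theorem initSegs_subset_setOf_length_eq (C : Set (ℕ → Bool)) (m : ℕ) :
    initSegs C m ⊆ {l | l.length = m} :=
  image_subset_iff.2 fun y _ => length_seg y m

theorem finite_initSegs (C : Set (ℕ → Bool)) (m : ℕ) : (initSegs C m).Finite :=
  (List.finite_length_eq Bool m).subset (initSegs_subset_setOf_length_eq C m)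

theorem ncard_initSegs_mono (h : C ⊆ D) (m : ℕ) : (initSegs C m).ncard ≤ (initSegs D m).ncard :=
  ncard_le_ncard (image_mono h) (finite_initSegs D m)

theorem ncard_setOf_length_eq (α : Type*) [Fintype α] (n : ℕ) :
    {l : List α | l.length = n}.ncard = Fintype.card α ^ n := by
  rw [← Nat.card_coe_set_eq]
  exact (Nat.card_eq_fintype_card (α := List.Vector α n)).trans (card_vector n)

theorem ncard_initSegs_le_two_pow (C : Set (ℕ → Bool)) (m : ℕ) :
    (initSegs C m).ncard ≤ 2 ^ m := by
  rw [← Fintype.card_bool, ← ncard_setOf_length_eq]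
  exact ncard_le_ncard (initSegs_subset_setOf_length_eq C m) (List.finite_length_eq Bool m)

theorem ncard_initSegs_add_le_mul {m d c : ℕ}
    (h : ∀ y ∈ C, (initSegs {z ∈ C | seg z m = seg y m} (m + d)).ncard ≤ c) :
    (initSegs C (m + d)).ncard ≤ c * (initSegs C m).ncard := by
  classical
  have htake : ∀ y : ℕ → Bool, (seg y (m + d)).take m = seg y m := fun y => by
    rw [seg_add, List.take_left' (length_seg y m)]
  set S := (finite_initSegs C (m + d)).toFinset with hS
  set T := (finite_initSegs C m).toFinset with hT
  have himage : S.image (List.take m) ⊆ T := by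
    intro t ht
    simp only [hS, hT, initSegs, Finset.mem_image, Finite.mem_toFinset, mem_image] at ht ⊢
    obtain ⟨_, ⟨y, hy, rfl⟩, rfl⟩ := ht
    exact ⟨y, hy, (htake y).symm⟩
  have hfibre : ∀ t ∈ S.image (List.take m), (S.filter fun s => s.take m = t).card ≤ c := by
    intro t ht
    simp only [hS, initSegs, Finset.mem_image, Finite.mem_toFinset, mem_image] at ht
    obtain ⟨_, ⟨y, hy, rfl⟩, rfl⟩ := ht
    rw [← ncard_coe_finset]
    refine (ncard_le_ncard ?_ (finite_initSegs _ _)).trans (h y hy)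
    intro s hs
    simp only [hS, initSegs, Finset.coe_filter, Finite.mem_toFinset, mem_image, mem_ofPred_eq] at hs
    obtain ⟨⟨z, hz, rfl⟩, hzy⟩ := hs
    exact ⟨z, ⟨hz, by rwa [htake, htake] at hzy⟩, rfl⟩
  rw [ncard_eq_toFinset_card _ (finite_initSegs C (m + d)),
    ncard_eq_toFinset_card _ (finite_initSegs C m)]
  exact (Finset.card_le_mul_card_image S c hfibre).trans
    (Nat.mul_le_mul_left c (Finset.card_le_card himage))

theorem ncard_initSegs_add_le (C : Set (ℕ → Bool)) (m d : ℕ) :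
    (initSegs C (m + d)).ncard ≤ 2 ^ d * (initSegs C m).ncard := by
  refine ncard_initSegs_add_le_mul fun y _ => ?_
  have hext : initSegs {z ∈ C | seg z m = seg y m} (m + d) ⊆
      (seg y m ++ ·) '' {l : List Bool | l.length = d} := by
    rintro _ ⟨z, ⟨_, hz⟩, rfl⟩
    exact ⟨seg (fun i => z (m + i)) d, length_seg _ d, by simp only [seg_add z, hz]⟩
  calc (initSegs {z ∈ C | seg z m = seg y m} (m + d)).ncard
      ≤ {l : List Bool | l.length = d}.ncard :=
        (ncard_le_ncard hext ((List.finite_length_eq Bool d).image _)).trans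
          (ncard_image_le (List.finite_length_eq Bool d))
    _ = 2 ^ d := by rw [ncard_setOf_length_eq, Fintype.card_bool]

theorem ncard_initSegs_cylSet_le {s : List Bool} {m : ℕ} (h : s.length ≤ m) :
    (initSegs (cylSet s) m).ncard ≤ 2 ^ (m - s.length) := by
  obtain ⟨d, rfl⟩ := Nat.exists_eq_add_of_le h
  have hone : (initSegs (cylSet s) s.length).ncard ≤ 1 :=
    (ncard_le_one_iff_subset_singleton (finite_initSegs _ _)).2 ⟨s, by
      rintro _ ⟨y, hy, rfl⟩
      exact mem_cylSet_iff.1 hy⟩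
  simpa using (ncard_initSegs_add_le (cylSet s) s.length d).trans (Nat.mul_le_mul_left _ hone)

end InitialSegments

section ThinLevels

/-- The levels of the tree of `C` have arbitrarily small relative size. For closed `C` this says
that `C` is null. -/
def HasThinLevels (C : Set (ℕ → Bool)) : Prop := ∀ j, ∃ m, j * (initSegs C m).ncard ≤ 2 ^ m

variable {C : Set (ℕ → Bool)}

theorem mul_ncard_initSegs_le_of_le {j m n : ℕ} (h : j * (initSegs C m).ncard ≤ 2 ^ m)
    (hmn : m ≤ n) : j * (initSegs C n).ncard ≤ 2 ^ n := by
  obtain ⟨d, rfl⟩ := Nat.exists_eq_add_of_le hmn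
  calc j * (initSegs C (m + d)).ncard ≤ j * (2 ^ d * (initSegs C m).ncard) :=
        Nat.mul_le_mul_left j (ncard_initSegs_add_le C m d)
    _ = j * (initSegs C m).ncard * 2 ^ d := by ring
    _ ≤ 2 ^ (m + d) := by
        rw [pow_add]
        exact Nat.mul_le_mul_right _ h

theorem HasThinLevels.exists_add (h : HasThinLevels C) (d j : ℕ) :
    ∃ m, j * (initSegs C (d + m)).ncard ≤ 2 ^ m := by
  obtain ⟨m, hm⟩ := h (j * 2 ^ d)
  refine ⟨m, ?_⟩
  calc j * (initSegs C (d + m)).ncard ≤ j * (2 ^ d * (initSegs C m).ncard) := by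
        rw [add_comm]
        exact Nat.mul_le_mul_left j (ncard_initSegs_add_le C m d)
    _ ≤ 2 ^ m := by rwa [← mul_assoc]

theorem hasThinLevels_singleton (y : ℕ → Bool) : HasThinLevels {y} := fun j =>
  ⟨j, by simpa [initSegs] using Nat.lt_two_pow_self.le⟩

theorem HasThinLevels.of_frequently_halved {b : ℕ → ℕ} (hb : Monotone b)
    (h : ∃ᶠ n in atTop,
      2 * (initSegs C (b (n + 1))).ncard * 2 ^ b n ≤ (initSegs C (b n)).ncard * 2 ^ b (n + 1)) :
    HasThinLevels C := by
  have hpow : ∀ j, ∃ n, 2 ^ j * (initSegs C (b n)).ncard ≤ 2 ^ b n := by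
    intro j
    induction j with
    | zero => exact ⟨0, by simpa using ncard_initSegs_le_two_pow C (b 0)⟩
    | succ j ih =>
      obtain ⟨n₀, hn₀⟩ := ih
      obtain ⟨n, hn, hhalf⟩ := frequently_atTop.1 h n₀
      refine ⟨n + 1, Nat.le_of_mul_le_mul_right ?_ (Nat.two_pow_pos (b n))⟩
      calc 2 ^ (j + 1) * (initSegs C (b (n + 1))).ncard * 2 ^ b n
          = 2 ^ j * (2 * (initSegs C (b (n + 1))).ncard * 2 ^ b n) := by ring
        _ ≤ 2 ^ j * ((initSegs C (b n)).ncard * 2 ^ b (n + 1)) := Nat.mul_le_mul_left _ hhalf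
        _ = 2 ^ j * (initSegs C (b n)).ncard * 2 ^ b (n + 1) := (mul_assoc _ _ _).symm
        _ ≤ 2 ^ b n * 2 ^ b (n + 1) :=
            Nat.mul_le_mul_right _ (mul_ncard_initSegs_le_of_le hn₀ (hb hn))
        _ = 2 ^ b (n + 1) * 2 ^ b n := mul_comm _ _
  intro j
  obtain ⟨n, hn⟩ := hpow j
  exact ⟨b n, (Nat.mul_le_mul_right _ Nat.lt_two_pow_self.le).trans hn⟩

theorem natCast_mul_inv_two_pow_le_inv_iff {j m n : ℕ} :
    (n : ℝ≥0∞) * 2⁻¹ ^ m ≤ (j : ℝ≥0∞)⁻¹ ↔ j * n ≤ 2 ^ m := by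
  rw [ENNReal.le_inv_iff_mul_le, ← ENNReal.inv_pow, mul_right_comm, ← div_eq_mul_inv,
    ENNReal.div_le_iff (by simp) (by simp), one_mul, mul_comm]
  exact_mod_cast Iff.rfl

theorem IsNullCantor.hasThinLevels (hnull : IsNullCantor C) (hclosed : IsClosed C) :
    HasThinLevels C := by
  intro j
  obtain ⟨s, hcover, hweight⟩ := hnull (j : ℝ≥0∞)⁻¹ (by simp)
  obtain ⟨t, ht⟩ := hclosed.isCompact.elim_finite_subcover _ (fun n => isOpen_cylSet (s n)) hcover
  set m := t.sup fun i => (s i).length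
  have hlen : ∀ i ∈ t, (s i).length ≤ m := fun i hi => Finset.le_sup (f := fun i => (s i).length) hi
  have hcount : (initSegs C m).ncard ≤ ∑ i ∈ t, 2 ^ (m - (s i).length) :=
    calc (initSegs C m).ncard ≤ (⋃ i ∈ t, initSegs (cylSet (s i)) m).ncard := by
          simp only [initSegs, ← image_iUnion]
          exact ncard_initSegs_mono ht m
      _ ≤ ∑ i ∈ t, (initSegs (cylSet (s i)) m).ncard := Finset.set_ncard_biUnion_le t _
      _ ≤ ∑ i ∈ t, 2 ^ (m - (s i).length) :=
          Finset.sum_le_sum fun i hi => ncard_initSegs_cylSet_le (hlen i hi)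
  refine ⟨m, natCast_mul_inv_two_pow_le_inv_iff.1 ?_⟩
  calc ((initSegs C m).ncard : ℝ≥0∞) * 2⁻¹ ^ m
      ≤ (∑ i ∈ t, 2 ^ (m - (s i).length)) * 2⁻¹ ^ m := by
        gcongr
        exact_mod_cast hcount
    _ = ∑ i ∈ t, 2⁻¹ ^ (s i).length := by
        rw [Finset.sum_mul]
        refine Finset.sum_congr rfl fun i hi => ?_
        nth_rewrite 2 [← Nat.sub_add_cancel (hlen i hi)]
        rw [pow_add, ← mul_assoc, ← mul_pow, ENNReal.mul_inv_cancel (by simp) (by simp), one_pow,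
          one_mul]
    _ ≤ (j : ℝ≥0∞)⁻¹ := (ENNReal.sum_le_tsum t).trans hweight

theorem exists_seq_tsum_inv_two_pow_length_le {m : ℕ} {Q : List (List Bool)}
    (hQ : ∀ t ∈ Q, t.length = m) (p : ℕ) : ∃ s : ℕ → List Bool, (∀ t ∈ Q, ∃ i, s i = t) ∧
      ∑' i, (2⁻¹ : ℝ≥0∞) ^ (s i).length ≤ Q.length * 2⁻¹ ^ m + 2⁻¹ ^ p := by
  refine ⟨fun i => Q.getD i (List.replicate (i + (p + 1)) false), fun t ht => ?_, ?_⟩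
  · obtain ⟨i, hi, rfl⟩ := List.getElem_of_mem ht
    exact ⟨i, List.getD_eq_getElem _ _ hi⟩
  have hweight : ∀ i, (2⁻¹ : ℝ≥0∞) ^ (Q.getD i (List.replicate (i + (p + 1)) false)).length ≤
      (if i ∈ Finset.range Q.length then 2⁻¹ ^ m else 0) + 2⁻¹ ^ (i + (p + 1)) := by
    intro i
    rcases lt_or_ge i Q.length with hi | hi
    · simp [hi, hQ]
    · simp [hi.not_gt]
  have hhead : ∑' i, (if i ∈ Finset.range Q.length then (2⁻¹ : ℝ≥0∞) ^ m else 0) =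
      Q.length * 2⁻¹ ^ m := by
    rw [tsum_eq_sum fun i hi => if_neg hi, Finset.sum_congr rfl fun i hi => if_pos hi,
      Finset.sum_const, Finset.card_range, nsmul_eq_mul]
  have htail : ∑' i, (2⁻¹ : ℝ≥0∞) ^ (i + (p + 1)) = 2⁻¹ ^ p := by
    simp only [pow_add _ _ (p + 1)]
    rw [ENNReal.tsum_mul_right, ENNReal.tsum_geometric, ENNReal.one_sub_inv_two, inv_inv, pow_succ',
      ← mul_assoc, ENNReal.mul_inv_cancel (by simp) (by simp), one_mul]
  calc _ ≤ ∑' i, ((if i ∈ Finset.range Q.length then (2⁻¹ : ℝ≥0∞) ^ m else 0) +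
        2⁻¹ ^ (i + (p + 1))) := ENNReal.tsum_le_tsum hweight
    _ = Q.length * 2⁻¹ ^ m + 2⁻¹ ^ p := by rw [ENNReal.tsum_add, hhead, htail]

theorem HasThinLevels.isNullCantor (h : HasThinLevels C) : IsNullCantor C := by
  intro ε hε
  have hε2 : ε / 2 ≠ 0 := (ENNReal.half_pos hε.ne').ne'
  obtain ⟨j, hj⟩ := ENNReal.exists_inv_nat_lt hε2
  obtain ⟨p, hp⟩ := ENNReal.exists_inv_two_pow_lt hε2
  obtain ⟨m, hm⟩ := h j
  set Q := (finite_initSegs C m).toFinset.toList with hQ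
  have hmemQ : ∀ s, s ∈ Q ↔ s ∈ initSegs C m := fun s => by simp [hQ]
  obtain ⟨s, hs, hsum⟩ := exists_seq_tsum_inv_two_pow_length_le
    (fun t ht => initSegs_subset_setOf_length_eq C m ((hmemQ t).1 ht)) p
  refine ⟨s, fun y hy => ?_, hsum.trans ?_⟩
  · obtain ⟨i, hi⟩ := hs _ ((hmemQ _).2 (mem_image_of_mem _ hy))
    exact mem_iUnion.2 ⟨i, mem_cylSet_iff.2 (by rw [hi, length_seg])⟩
  · rw [hQ, Finset.length_toList, ← ncard_eq_toFinset_card _ (finite_initSegs C m)]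
    calc _ ≤ ε / 2 + ε / 2 :=
          add_le_add ((natCast_mul_inv_two_pow_le_inv_iff.2 hm).trans hj.le) hp.le
      _ = ε := ENNReal.add_halves ε

end ThinLevels

section ClosedNullIdeal

variable {C : Set (ℕ → Bool)}

theorem HasThinLevels.mem_eIdeal (h : HasThinLevels C) (hC : IsClosed C) : C ∈ EIdeal :=
  ⟨fun _ => C, fun _ => ⟨hC, h.isNullCantor⟩, subset_iUnion_of_subset 0 subset_rfl⟩

theorem isLowerSet_eIdeal : IsLowerSet EIdeal :=
  fun _ _ hBA ⟨C, hC, hA⟩ => ⟨C, hC, hBA.trans hA⟩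

theorem sUnion_eIdeal : ⋃₀ EIdeal = Set.univ :=
  sUnion_eq_univ_iff.2 fun y =>
    ⟨{y}, (hasThinLevels_singleton y).mem_eIdeal isClosed_singleton, mem_singleton y⟩

end ClosedNullIdeal

section Encoding

theorem ofBits_getD_seg_of_mem_cylSet {σ : List Bool} {z : ℕ → Bool} {k M : ℕ} (hM : M ≤ k + 1)
    (hz : z ∈ cylSet (σ ++ seg k.testBit (k + 1))) :
    Nat.ofBits (fun i : Fin M => (seg z (σ.length + M)).getD (σ.length + i) false) = k % 2 ^ M := by
  rw [← Nat.ofBits_testBit]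
  congr 1
  funext i
  have hi : (i : ℕ) < k + 1 := i.isLt.trans_le hM
  rw [getD_seg (by omega)]
  simpa [seg] using hz ⟨σ.length + i, by simpa using hi⟩

theorem HasThinLevels.setOf_inter_cylSet_nonempty_mem_densityZero {C : Set (ℕ → Bool)}
    (h : HasThinLevels C) (σ : List Bool) :
    {k : ℕ | (C ∩ cylSet (σ ++ seg k.testBit (k + 1))).Nonempty} ∈ densityZero := by
  refine mem_densityZero_of_mod_mem fun j => ?_
  obtain ⟨M, hM⟩ := h.exists_add σ.length j
  let R : Finset ℕ := (finite_initSegs C (σ.length + M)).toFinset.image fun s =>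
    Nat.ofBits fun i : Fin M => s.getD (σ.length + i) false
  refine ⟨2 ^ M, R, ?_, ?_⟩
  · refine (Nat.mul_le_mul_left j Finset.card_image_le).trans ?_
    rwa [← ncard_eq_toFinset_card _ (finite_initSegs C _)]
  · filter_upwards [eventually_ge_atTop M] with k hk ⟨z, hzC, hz⟩
    exact Finset.mem_image.2 ⟨seg z (σ.length + M),
      (Finite.mem_toFinset _).2 (mem_image_of_mem _ hzC),
      ofBits_getD_seg_of_mem_cylSet (by omega) hz⟩

/-- The concatenation of the binary expansions of the entries of `s`, where `k` is written with
`k + 1` bits, least significant bit first. -/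
def codeList (s : List ℕ) : List Bool := s.flatMap fun k => seg k.testBit (k + 1)

/-- The infinite concatenation of the binary expansions of the entries of `x`, a map `ω^ω → 2^ω`
along which members of `ℰ` pull back to members of `M_𝒵`. Position `i` is already determined by the
first `i + 1` entries, so the default value of `getD` is never used. -/
def code (x : ℕ → ℕ) : ℕ → Bool := fun i => (codeList (seg x (i + 1))).getD i false

theorem codeList_seg_succ (x : ℕ → ℕ) (n : ℕ) :
    codeList (seg x (n + 1)) = codeList (seg x n) ++ seg (x n).testBit (x n + 1) := by
  simp [codeList, seg_succ]

theorem le_length_codeList (s : List ℕ) : s.length ≤ (codeList s).length := by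
  induction s with
  | nil => exact Nat.zero_le _
  | cons k s ih => simp only [codeList, List.flatMap_cons, List.length_append, length_seg,
      List.length_cons] at ih ⊢; omega

theorem code_mem_cylSet (x : ℕ → ℕ) (n : ℕ) : code x ∈ cylSet (codeList (seg x n)) := by
  intro i
  have hi : (i : ℕ) < (codeList (seg x (i + 1))).length :=
    (Nat.lt_succ_self _).trans_le ((length_seg x _).ge.trans (le_length_codeList _))
  rw [code, List.getD_eq_getElem _ _ hi, List.get_eq_getElem]
  rcases le_total n (i + 1) with h | h
  · exact (((seg_prefix_seg x h).flatMap _).getElem i.isLt).symm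
  · exact ((seg_prefix_seg x h).flatMap _).getElem hi

theorem preimage_code_mem_mIdeal {A : Set (ℕ → Bool)} (hA : A ∈ EIdeal) :
    code ⁻¹' A ∈ MIdeal densityZero := by
  obtain ⟨C, hC, hAC⟩ := hA
  refine ⟨fun n s => {k | (C n ∩ cylSet (codeList s ++ seg k.testBit (k + 1))).Nonempty},
    fun n s => ((hC n).2.hasThinLevels (hC n).1).setOf_inter_cylSet_nonempty_mem_densityZero _,
    fun x hx => ?_⟩
  obtain ⟨n, hn⟩ := mem_iUnion.1 (hAC hx)
  exact mem_iUnion.2 ⟨n, Eventually.of_forall fun m =>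
    ⟨code x, hn, codeList_seg_succ x m ▸ code_mem_cylSet x (m + 1)⟩⟩

theorem univ_notMem_eIdeal : Set.univ ∉ EIdeal := fun h =>
  isIdealOn_densityZero.univ_notMem_mIdeal (preimage_code_mem_mIdeal h)

end Encoding

section Decoding

/-- The position where block `n` begins when `ω` is cut into consecutive blocks of lengths `k`. -/
def blockStart (k : ℕ → ℕ) (n : ℕ) : ℕ := ∑ i ∈ Finset.range n, k i

/-- The sequence of numbers whose binary digits, least significant first, are the consecutive
blocks of `y` of lengths `k`. For suitable `k`, members of `M_𝒵` pull back along `decode k` to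
members of `ℰ`. -/
def decode (k : ℕ → ℕ) (y : ℕ → Bool) (n : ℕ) : ℕ :=
  Nat.ofBits fun i : Fin (k n) => y (blockStart k n + i)

/-- At most half of the values available to `decode k y n` belong to the set that `φ` assigns to
the history of `decode k y`. -/
def HalvesAt (k : ℕ → ℕ) (φ : List ℕ → Set ℕ) (n : ℕ) : Prop :=
  ∀ y, 2 * (φ (seg (decode k y) n) ∩ Iio (2 ^ k n)).ncard ≤ 2 ^ k n

/-- The binary sequences whose decoding is captured by `φ` from `n₀` on. -/
def capturedFrom (k : ℕ → ℕ) (φ : List ℕ → Set ℕ) (n₀ : ℕ) : Set (ℕ → Bool) :=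
  {y | ∀ n ≥ n₀, decode k y n ∈ φ (seg (decode k y) n)}

variable {k : ℕ → ℕ} {φ : List ℕ → Set ℕ} {y z : ℕ → Bool} {n : ℕ}

theorem blockStart_succ (k : ℕ → ℕ) (n : ℕ) : blockStart k (n + 1) = blockStart k n + k n :=
  Finset.sum_range_succ _ _

theorem monotone_blockStart (k : ℕ → ℕ) : Monotone (blockStart k) :=
  monotone_nat_of_le_succ fun n => blockStart_succ k n ▸ Nat.le_add_right _ _

theorem decode_lt (k : ℕ → ℕ) (y : ℕ → Bool) (n : ℕ) : decode k y n < 2 ^ k n :=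
  Nat.ofBits_lt_two_pow _

theorem seg_blockStart_succ (k : ℕ → ℕ) (y : ℕ → Bool) (n : ℕ) :
    seg y (blockStart k (n + 1)) = seg y (blockStart k n) ++ seg (decode k y n).testBit (k n) := by
  rw [blockStart_succ, seg_add]
  exact congrArg _ (seg_eq_seg_iff.2 fun i hi => by rw [decode, Nat.testBit_ofBits_lt _ _ hi])

theorem decode_eq_of_seg_eq (h : seg y (blockStart k (n + 1)) = seg z (blockStart k (n + 1))) :
    decode k y n = decode k z n := by
  unfold decode
  congr 1
  funext i
  exact seg_eq_seg_iff.1 h _ (by rw [blockStart_succ]; omega)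

theorem seg_decode_eq_of_seg_eq (h : seg y (blockStart k n) = seg z (blockStart k n)) :
    seg (decode k y) n = seg (decode k z) n :=
  seg_eq_seg_iff.2 fun _ hm => decode_eq_of_seg_eq <| seg_eq_seg_iff.2 fun i hi =>
    seg_eq_seg_iff.1 h i (hi.trans_le (monotone_blockStart k hm))

theorem isClosed_capturedFrom (k : ℕ → ℕ) (φ : List ℕ → Set ℕ) (n₀ : ℕ) :
    IsClosed (capturedFrom k φ n₀) := by
  simp only [capturedFrom, ofPred_forall]
  refine isClosed_iInter fun n => isClosed_iInter fun _ =>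
    DeterminedBy.isClosed (n := blockStart k (n + 1)) fun y z hyz => ?_
  have hseg : seg y (blockStart k n) = seg z (blockStart k n) := seg_eq_seg_iff.2 fun i hi =>
    hyz i (hi.trans_le (monotone_blockStart k n.le_succ))
  simp only [mem_ofPred_eq, decode_eq_of_seg_eq (seg_eq_seg_iff.2 hyz),
    seg_decode_eq_of_seg_eq hseg]

theorem HalvesAt.ncard_initSegs_capturedFrom_le (h : HalvesAt k φ n) {n₀ : ℕ} (hn : n₀ ≤ n) :
    2 * (initSegs (capturedFrom k φ n₀) (blockStart k (n + 1))).ncard ≤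
      2 ^ k n * (initSegs (capturedFrom k φ n₀) (blockStart k n)).ncard := by
  set C := capturedFrom k φ n₀
  set b := blockStart k n
  have hfibre : ∀ y ∈ C, (initSegs {z ∈ C | seg z b = seg y b} (b + k n)).ncard ≤ 2 ^ k n / 2 := by
    intro y _
    set W := φ (seg (decode k y) n) ∩ Iio (2 ^ k n)
    have hW : W.Finite := (finite_Iio _).inter_of_right _
    have hsub : initSegs {z ∈ C | seg z b = seg y b} (b + k n) ⊆
        (fun r : ℕ => seg y b ++ seg r.testBit (k n)) '' W := by
      rintro _ ⟨z, ⟨hz, hzy⟩, rfl⟩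
      refine ⟨decode k z n, ⟨seg_decode_eq_of_seg_eq hzy ▸ hz n hn, decode_lt k z n⟩, ?_⟩
      simp only [← hzy, ← seg_blockStart_succ, blockStart_succ, b]
    have hle := (ncard_le_ncard hsub (hW.image _)).trans (ncard_image_le hW)
    have hhalf : 2 * W.ncard ≤ 2 ^ k n := h y
    omega
  calc 2 * (initSegs C (blockStart k (n + 1))).ncard
      ≤ 2 * (2 ^ k n / 2 * (initSegs C b).ncard) := by
        rw [blockStart_succ]
        exact Nat.mul_le_mul_left 2 (ncard_initSegs_add_le_mul hfibre)
    _ ≤ 2 ^ k n * (initSegs C b).ncard := by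
        rw [← mul_assoc]
        exact Nat.mul_le_mul_right _ (Nat.mul_div_le _ 2)

theorem hasThinLevels_capturedFrom (h : ∃ᶠ n in atTop, HalvesAt k φ n) (n₀ : ℕ) :
    HasThinLevels (capturedFrom k φ n₀) := by
  refine HasThinLevels.of_frequently_halved (monotone_blockStart k)
    ((h.and_eventually (eventually_ge_atTop n₀)).mono fun n hn => ?_)
  rw [blockStart_succ, pow_add, mul_comm (2 ^ _) (2 ^ k n), ← mul_assoc, ← blockStart_succ,
    mul_comm _ (2 ^ k n)]
  exact Nat.mul_le_mul_right _ (hn.1.ncard_initSegs_capturedFrom_le hn.2)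

theorem setOf_eventually_decode_mem_mem_eIdeal (h : ∃ᶠ n in atTop, HalvesAt k φ n) :
    {y | ∀ᶠ n in atTop, decode k y n ∈ φ (seg (decode k y) n)} ∈ EIdeal :=
  ⟨capturedFrom k φ, fun n₀ => ⟨isClosed_capturedFrom k φ n₀,
    (hasThinLevels_capturedFrom h n₀).isNullCantor⟩,
    fun _ hy => mem_iUnion.2 (eventually_atTop.1 hy)⟩

end Decoding

section Unboundedness

theorem exists_forall_not_leStar_frequently_lt (h : ℕ → ℕ) :
    ∃ f : ℕ → ℕ, ∀ k, ¬ LeStar k f → ∃ᶠ n in atTop, h (k n) < k (n + 1) := by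
  set H : ℕ → ℕ := ⇑(partialSups fun m => max (h m) m)
  have hH : ∀ m, max (h m) m ≤ H m := le_partialSups fun m => max (h m) m
  have hmono : Monotone H := (partialSups fun m => max (h m) m).monotone
  have hiter : Monotone fun n => H^[n] :=
    Function.monotone_iterate_of_id_le fun m => (le_max_right _ _).trans (hH m)
  -- If `k (n + 1) ≤ h (k n)` from `n₀` on, then `k n ≤ H^[n] (k n₀)`, and `k n₀ ≤ n` eventually.
  refine ⟨fun n => H^[n] n, fun k hk => ?_⟩
  by_contra hslow
  obtain ⟨n₀, hn₀⟩ := eventually_atTop.1 (not_frequently.1 hslow)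
  have hgrowth : ∀ i, k (n₀ + i) ≤ H^[i] (k n₀) := by
    intro i
    induction i with
    | zero => exact le_rfl
    | succ i ih =>
      rw [Function.iterate_succ_apply']
      calc k (n₀ + i + 1) ≤ h (k (n₀ + i)) := not_lt.1 (hn₀ _ (Nat.le_add_right _ _))
        _ ≤ H (k (n₀ + i)) := (le_max_left _ _).trans (hH _)
        _ ≤ H (H^[i] (k n₀)) := hmono ih
  refine hk ?_
  filter_upwards [eventually_ge_atTop n₀, eventually_ge_atTop (k n₀)] with n hn hkn
  obtain ⟨i, rfl⟩ := Nat.exists_eq_add_of_le hn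
  calc k (n₀ + i) ≤ H^[i] (k n₀) := hgrowth i
    _ ≤ H^[n₀ + i] (k n₀) := hiter (Nat.le_add_left _ _) _
    _ ≤ H^[n₀ + i] (n₀ + i) := hmono.iterate _ hkn

/-- A strictly increasing sequence of block lengths above `g`. -/
def blockLength (g : ℕ → ℕ) (n : ℕ) : ℕ := ∑ i ∈ Finset.range (n + 1), (g i + 1)

theorem strictMono_blockLength (g : ℕ → ℕ) : StrictMono (blockLength g) :=
  strictMono_nat_of_lt_succ fun n => by
    rw [blockLength, blockLength, Finset.sum_range_succ _ (n + 1)]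
    omega

theorem le_blockLength (g : ℕ → ℕ) (n : ℕ) : g n ≤ blockLength g n := by
  rw [blockLength, Finset.sum_range_succ]
  omega

theorem finite_setOf_length_le_forall_lt (m b : ℕ) :
    {s : List ℕ | s.length ≤ m ∧ ∀ a ∈ s, a < b}.Finite := by
  refine ((List.finite_length_le (Fin b) m).image (List.map Fin.val)).subset ?_
  rintro s ⟨hs, hlt⟩
  exact ⟨s.attach.map fun a => ⟨a.1, hlt a.1 a.2⟩, by simpa using hs, by simp⟩

theorem seg_decode_blockLength_mem (g : ℕ → ℕ) (y : ℕ → Bool) (n : ℕ) :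
    seg (decode (blockLength g) y) (n + 1) ∈
      {s : List ℕ | s.length ≤ blockLength g n + 1 ∧ ∀ a ∈ s, a < 2 ^ blockLength g n} := by
  refine ⟨?_, fun a ha => ?_⟩
  · rw [length_seg]
    exact Nat.succ_le_succ ((strictMono_blockLength g).le_apply)
  · simp only [seg, List.mem_map, List.mem_range] at ha
    obtain ⟨i, hi, rfl⟩ := ha
    exact (decode_lt _ y i).trans_le (Nat.pow_le_pow_right two_pos
      ((strictMono_blockLength g).monotone (Nat.lt_succ_iff.1 hi)))

theorem exists_forall_not_leStar_frequently_halvesAt {φ : List ℕ → Set ℕ}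
    (hφ : ∀ s, ∀ᶠ N in atTop, 2 * (φ s ∩ Iio N).ncard ≤ N) :
    ∃ f : ℕ → ℕ, ∀ g, ¬ LeStar g f → ∃ᶠ n in atTop, HalvesAt (blockLength g) φ n := by
  have hbound : ∀ m, ∃ N₀, ∀ N ≥ N₀, ∀ s ∈ {s : List ℕ | s.length ≤ m + 1 ∧ ∀ a ∈ s, a < 2 ^ m},
      2 * (φ s ∩ Iio N).ncard ≤ N := fun m =>
    eventually_atTop.1 <|
      (eventually_all_finite (finite_setOf_length_le_forall_lt _ _)).2 fun s _ => hφ s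
  choose h hh using hbound
  obtain ⟨f, hf⟩ := exists_forall_not_leStar_frequently_lt h
  refine ⟨f, fun g hg => ?_⟩
  have hunbounded : ¬ LeStar (blockLength g) f :=
    fun hle => hg (hle.mono fun n => (le_blockLength g n).trans)
  refine (tendsto_add_atTop_nat 1).frequently ((hf _ hunbounded).mono fun n hn y => ?_)
  exact hh _ _ (hn.le.trans Nat.lt_two_pow_self.le) _ (seg_decode_blockLength_mem g y n)

theorem exists_forall_not_leStar_preimage_decode_mem_eIdeal {A : Set (ℕ → ℕ)}
    (hA : A ∈ MIdeal densityZero) :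
    ∃ f : ℕ → ℕ, ∀ g, ¬ LeStar g f → decode (blockLength g) ⁻¹' A ∈ EIdeal := by
  obtain ⟨φ, hφ, hAφ⟩ := isIdealOn_densityZero.exists_forall_eventually_mem hA
  obtain ⟨f, hf⟩ := exists_forall_not_leStar_frequently_halvesAt
    fun s => mem_densityZero_iff.1 (hφ s) 2
  exact ⟨f, fun g hg => isLowerSet_eIdeal (fun _ hy => hAφ _ hy)
    (setOf_eventually_decode_mem_mem_eIdeal (hf g hg))⟩

end Unboundedness

section CardinalInvariants

variable {X Y ι : Type} {I : Set (Set X)} {J : Set (Set Y)} {F : Set (ℕ → ℕ)}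

theorem nonIdeal_le_mk {S : Set Y} (hS : S ∉ J) : nonIdeal J ≤ #S :=
  csInf_le' ⟨S, hS, rfl⟩

theorem exists_mk_eq_nonIdeal (hJ : Set.univ ∉ J) : ∃ S ∉ J, #S = nonIdeal J :=
  csInf_mem (s := {c | ∃ S ∉ J, #S = c}) ⟨_, _, hJ, rfl⟩

theorem covIdeal_le_mk {A : ι → Set Y} (hA : ∀ i, A i ∈ J) (hcover : ∀ y, ∃ i, y ∈ A i) :
    covIdeal J ≤ #ι :=
  le_trans (csInf_le' ⟨range A, range_subset_iff.2 hA,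
    by simpa only [sUnion_range] using iUnion_eq_univ_iff.2 hcover, rfl⟩) mk_range_le

theorem exists_mk_eq_covIdeal (hJ : ⋃₀ J = Set.univ) :
    ∃ 𝒜 ⊆ J, ⋃₀ 𝒜 = Set.univ ∧ #𝒜 = covIdeal J :=
  csInf_mem (s := {c | ∃ 𝒜 ⊆ J, ⋃₀ 𝒜 = Set.univ ∧ #𝒜 = c}) ⟨_, J, subset_rfl, hJ, rfl⟩

theorem bNum_le_mk (hF : ∀ g, ∃ f ∈ F, ¬ LeStar f g) : bNum ≤ #F :=
  csInf_le' ⟨F, hF, rfl⟩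

theorem exists_mk_eq_bNum : ∃ F : Set (ℕ → ℕ), (∀ g, ∃ f ∈ F, ¬ LeStar f g) ∧ #F = bNum := by
  refine csInf_mem (s := {c | ∃ F : Set (ℕ → ℕ), (∀ g, ∃ f ∈ F, ¬ LeStar f g) ∧ #F = c})
    ⟨_, Set.univ, fun g => ⟨fun n => g n + 1, mem_univ _, fun h => ?_⟩, rfl⟩
  obtain ⟨n, hn⟩ := h.exists
  exact Nat.not_succ_le_self _ hn

theorem dNum_le_mk {f : ι → ℕ → ℕ} (hf : ∀ g, ∃ i, LeStar g (f i)) : dNum ≤ #ι :=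
  le_trans (csInf_le' ⟨range f, fun g => by simpa using hf g, rfl⟩) mk_range_le

theorem exists_mk_eq_dNum : ∃ F : Set (ℕ → ℕ), (∀ f, ∃ g ∈ F, LeStar f g) ∧ #F = dNum :=
  csInf_mem (s := {c | ∃ F : Set (ℕ → ℕ), (∀ f, ∃ g ∈ F, LeStar f g) ∧ #F = c})
    ⟨_, Set.univ, fun f => ⟨f, mem_univ _, Eventually.of_forall fun _ => le_rfl⟩, rfl⟩

theorem infinite_of_forall_exists_not_leStar (hF : ∀ g, ∃ f ∈ F, ¬ LeStar f g) : F.Infinite := by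
  intro hfin
  obtain ⟨f, hf, hlarge⟩ := hF fun n => ∑ f ∈ hfin.toFinset, f n
  exact hlarge (Eventually.of_forall fun n => Finset.single_le_sum
    (f := fun f : ℕ → ℕ => f n) (fun _ _ => Nat.zero_le _) (hfin.mem_toFinset.2 hf))

theorem aleph0_le_bNum : ℵ₀ ≤ bNum := by
  obtain ⟨F, hF, hcard⟩ := exists_mk_eq_bNum
  exact hcard ▸ infinite_iff.1 (infinite_of_forall_exists_not_leStar hF).to_subtype

theorem nonIdeal_le_nonIdeal_of_preimage_mem (hI : IsLowerSet I) (hI' : Set.univ ∉ I) {e : X → Y}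
    (he : ∀ B ∈ J, e ⁻¹' B ∈ I) : nonIdeal J ≤ nonIdeal I := by
  obtain ⟨S, hS, hcard⟩ := exists_mk_eq_nonIdeal hI'
  have himage : e '' S ∉ J := fun h => hS (hI (subset_preimage_image e S) (he _ h))
  exact hcard ▸ (nonIdeal_le_mk himage).trans mk_image_le

theorem covIdeal_le_covIdeal_of_preimage_mem (hJ : ⋃₀ J = Set.univ) {e : X → Y}
    (he : ∀ B ∈ J, e ⁻¹' B ∈ I) : covIdeal I ≤ covIdeal J := by
  obtain ⟨𝒜, h𝒜, hcover, hcard⟩ := exists_mk_eq_covIdeal hJ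
  refine hcard ▸ covIdeal_le_mk (A := fun A : 𝒜 => e ⁻¹' A) (fun A => he _ (h𝒜 A.2)) fun x => ?_
  simpa using sUnion_eq_univ_iff.1 hcover (e x)

theorem bNum_le_nonIdeal {I : Set (Set (ℕ → ℕ))} (hI : IsLowerSet I) (hI' : Set.univ ∉ I)
    (hbdd : ∀ g, {x | LeStar x g} ∈ I) : bNum ≤ nonIdeal I := by
  obtain ⟨S, hS, hcard⟩ := exists_mk_eq_nonIdeal hI'
  refine hcard ▸ bNum_le_mk fun g => ?_
  by_contra! hg
  exact hS (hI hg (hbdd g))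

theorem covIdeal_le_dNum {I : Set (Set (ℕ → ℕ))} (hbdd : ∀ g, {x | LeStar x g} ∈ I) :
    covIdeal I ≤ dNum := by
  obtain ⟨F, hF, hcard⟩ := exists_mk_eq_dNum
  exact hcard ▸ covIdeal_le_mk (A := fun g : F => {x | LeStar x g}) (fun g => hbdd g)
    fun x => by simpa using hF x

theorem nonIdeal_le_max_bNum_nonIdeal (hJ : IsLowerSet J) (hJ' : Set.univ ∉ J)
    {Φ : (ℕ → ℕ) → Y → X} (hΦ : ∀ A ∈ I, ∃ f, ∀ g, ¬ LeStar g f → Φ g ⁻¹' A ∈ J) :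
    nonIdeal I ≤ max bNum (nonIdeal J) := by
  obtain ⟨F, hF, hFcard⟩ := exists_mk_eq_bNum
  obtain ⟨S, hS, hScard⟩ := exists_mk_eq_nonIdeal hJ'
  have himage : image2 Φ F S ∉ I := by
    intro hA
    obtain ⟨f, hf⟩ := hΦ _ hA
    obtain ⟨g, hg, hgf⟩ := hF f
    exact hS (hJ (fun y hy => mem_image2_of_mem hg hy) (hf g hgf))
  calc nonIdeal I ≤ #(image2 Φ F S) := nonIdeal_le_mk himage
    _ ≤ bNum * nonIdeal J := hFcard ▸ hScard ▸ mk_image2_le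
    _ ≤ max bNum (nonIdeal J) := mul_le_max_of_aleph0_le_left aleph0_le_bNum

theorem min_dNum_covIdeal_le_covIdeal (hI : ⋃₀ I = Set.univ) {Φ : (ℕ → ℕ) → Y → X}
    (hΦ : ∀ A ∈ I, ∃ f, ∀ g, ¬ LeStar g f → Φ g ⁻¹' A ∈ J) :
    min dNum (covIdeal J) ≤ covIdeal I := by
  obtain ⟨𝒜, h𝒜, hcover, hcard⟩ := exists_mk_eq_covIdeal hI
  choose f hf using fun A : 𝒜 => hΦ A (h𝒜 A.2)
  rw [← hcard, min_le_iff]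
  by_cases hdom : ∀ g, ∃ A, LeStar g (f A)
  · exact .inl (dNum_le_mk hdom)
  · push Not at hdom
    obtain ⟨g, hg⟩ := hdom
    refine .inr (covIdeal_le_mk (A := fun A : 𝒜 => Φ g ⁻¹' A) (fun A => hf A g (hg A)) fun y => ?_)
    simpa using sUnion_eq_univ_iff.1 hcover (Φ g y)

end CardinalInvariants

/-- For the density zero ideal `𝒵`:
`non(M_𝒵) = max {𝔟, non(ℰ)}` and `cov(M_𝒵) = min {𝔡, cov(ℰ)}`. -/
theorem stmt18 :
    nonIdeal (MIdeal densityZero) = max bNum (nonIdeal EIdeal) ∧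
    covIdeal (MIdeal densityZero) = min dNum (covIdeal EIdeal) := by
  have huniv : Set.univ ∉ MIdeal densityZero := isIdealOn_densityZero.univ_notMem_mIdeal
  have hbdd : ∀ g, {x | LeStar x g} ∈ MIdeal densityZero :=
    isIdealOn_densityZero.setOf_leStar_mem_mIdeal
  have hcover : ⋃₀ MIdeal densityZero = Set.univ :=
    sUnion_eq_univ_iff.2 fun x => ⟨_, hbdd x, Eventually.of_forall fun _ => le_rfl⟩
  have hcode : ∀ A ∈ EIdeal, code ⁻¹' A ∈ MIdeal densityZero := fun _ => preimage_code_mem_mIdeal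
  have hdecode : ∀ A ∈ MIdeal densityZero, ∃ f, ∀ g, ¬ LeStar g f →
      decode (blockLength g) ⁻¹' A ∈ EIdeal :=
    fun _ => exists_forall_not_leStar_preimage_decode_mem_eIdeal
  constructor
  · exact le_antisymm
      (nonIdeal_le_max_bNum_nonIdeal isLowerSet_eIdeal univ_notMem_eIdeal hdecode)
      (max_le (bNum_le_nonIdeal isLowerSet_mIdeal huniv hbdd)
        (nonIdeal_le_nonIdeal_of_preimage_mem isLowerSet_mIdeal huniv hcode))
  · exact le_antisymm
      (le_min (covIdeal_le_dNum hbdd) (covIdeal_le_covIdeal_of_preimage_mem sUnion_eIdeal hcode))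
      (min_dNum_covIdeal_le_covIdeal hcover hdecode)

end
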